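/- Let J₀ be a two-sided p-periodic Jacobi matrix with discriminant Δ_{J₀} and isospectral torus T_{J₀}, and let J = J(a,b) be an arbitrary two-sided Jacobi operator (bounded parameters, a_n > 0, not assumed periodic). Then Δ_{J₀}(J) = S^p + S^{−p} as bounded operators on ℓ²(ℤ) if and only if (a,b) ∈ T_{J₀}, that is, if and only if a and b are p-periodic and Δ_{(a,b)} = Δ_{J₀}. -/

import Mathlib

open scoped ComplexConjugate

noncomputable section

/-- The two-sided Hilbert space `ℓ²(ℤ)`. -/
abbrev HZ : Type := lp (fun _ : ℤ => ℂ) 2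

/-- The transfer matrix `Λ_n(x) = (1/a_n)·[[x − b_n, −1], [a_n², 0]]`
as a 2×2 matrix over `ℝ[x]`. -/
def lamMat (a b : ℤ → ℝ) (n : ℤ) : Matrix (Fin 2) (Fin 2) (Polynomial ℝ) :=
  Polynomial.C (a n)⁻¹ • !![Polynomial.X - Polynomial.C (b n), -1;
    Polynomial.C ((a n) ^ 2), 0]

/-- The ordered product `Λ_n ⋯ Λ_2 Λ_1`. -/
def tMat (a b : ℤ → ℝ) : ℕ → Matrix (Fin 2) (Fin 2) (Polynomial ℝ)
  | 0 => 1
  | n + 1 => lamMat a b ((n : ℤ) + 1) * tMat a b n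

/-- The discriminant `Δ_{(a,b)}(x) = Tr(Λ_p(x) ⋯ Λ_1(x))` of `p`-periodic Jacobi
parameters. -/
def disc (a b : ℤ → ℝ) (p : ℕ) : Polynomial ℝ := Matrix.trace (tMat a b p)

/-- Evaluation of a real polynomial at a bounded operator. -/
def polyOp (q : Polynomial ℝ) (A : HZ →L[ℂ] HZ) : HZ →L[ℂ] HZ :=
  Polynomial.aeval A (q.map (algebraMap ℝ ℂ))

/-- Membership in the isospectral torus of the `p`-periodic Jacobi matrix with
parameters `(a₀,b₀)`: the parameters `(a',b')` are positive, `p`-periodic, and have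
the same discriminant. -/
def InTorus (p : ℕ) (a0 b0 a' b' : ℤ → ℝ) : Prop :=
  (∀ n, 0 < a' n) ∧ Function.Periodic a' (p : ℤ) ∧ Function.Periodic b' (p : ℤ) ∧
    disc a' b' p = disc a0 b0 p

/-!
Make `ℓ²(ℤ)` an `ℝ[X]`-module with `X` acting as `J`. The symmetry of `J` says that the basis
vectors `eₙ` solve the Jacobi recurrence with spectral parameter `X`, so the transfer matrices,
whose entries are polynomials in `X`, carry `(eₙ, aₙ₋₁ eₙ₋₁)` to `(eₙ₊₁, aₙ eₙ)`.

If `a` and `b` are `p`-periodic, the same matrix `T` of determinant one crosses two successive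
periods, and Cayley–Hamilton, `T² + 1 = tr(T) T`, becomes `Δ(J) eₙ = eₙ₊ₚ + eₙ₋ₚ`. The base point
is immaterial since the trace is cyclic.

Conversely, if `q(J) = S ^ p + S⁻ᵖ`, then `J` commutes with the right-hand side, and comparing
outermost matrix entries gives the periodicity of `a` and `b`. Hence `q(J) = Δ(J)`, and `q = Δ`
because `q(J)` has nonzero entries on its outermost diagonal, at distance `deg q` from the main one.
-/

open Polynomial

section TransferMatrix

open Matrix

variable {a b : ℤ → ℝ} {p : ℕ}

lemma lamMat_eq (n : ℤ) : lamMat a b n =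
    !![C (a n)⁻¹ * (X - C (b n)), -C (a n)⁻¹; C (a n)⁻¹ * C (a n ^ 2), 0] := by
  simp [lamMat, smul_of]

lemma det_lamMat {n : ℤ} (ha : a n ≠ 0) : (lamMat a b n).det = 1 := by
  rw [lamMat_eq, det_fin_two_of, mul_zero, zero_sub, neg_mul, neg_neg, ← C_mul, ← C_mul,
    ← C_1]
  congr 1
  field_simp

lemma det_tMat (ha : ∀ n, a n ≠ 0) (n : ℕ) : (tMat a b n).det = 1 := by
  induction n with
  | zero => simp [tMat]
  | succ n ih => rw [tMat, det_mul, det_lamMat (ha _), ih, one_mul]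

lemma tMat_succ_eq_translate_mul (a b : ℤ → ℝ) (n : ℕ) :
    tMat a b (n + 1) = tMat (fun k ↦ a (k + 1)) (fun k ↦ b (k + 1)) n * lamMat a b 1 := by
  induction n with
  | zero => simp [tMat]
  | succ n ih =>
    rw [tMat, ih, ← Matrix.mul_assoc, tMat]
    simp [lamMat]

lemma disc_translate_one (ha : a.Periodic p) (hb : b.Periodic p) :
    disc (fun n ↦ a (n + 1)) (fun n ↦ b (n + 1)) p = disc a b p := by
  cases p with
  | zero => simp [disc, tMat]
  | succ m =>
    have hlam : lamMat (fun n ↦ a (n + 1)) (fun n ↦ b (n + 1)) (m + 1) = lamMat a b 1 := by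
      have ha1 : a (m + 1 + 1) = a 1 := by simpa [add_comm] using ha 1
      have hb1 : b (m + 1 + 1) = b 1 := by simpa [add_comm] using hb 1
      simp only [lamMat, ha1, hb1]
    rw [disc, disc, tMat, hlam, tMat_succ_eq_translate_mul a b, trace_mul_comm]

lemma disc_translate (ha : a.Periodic p) (hb : b.Periodic p) (k : ℤ) :
    disc (fun n ↦ a (n + k)) (fun n ↦ b (n + k)) p = disc a b p := by
  have hstep (k : ℤ) : disc (fun n ↦ a (n + (k + 1))) (fun n ↦ b (n + (k + 1))) p =
      disc (fun n ↦ a (n + k)) (fun n ↦ b (n + k)) p := by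
    rw [← disc_translate_one (ha.add_const k) (hb.add_const k)]
    simp only [add_right_comm _ (1 : ℤ) k, add_assoc]
  induction k with
  | zero => simp
  | succ i ih => rw [hstep, ih]
  | pred i ih => rw [← hstep, sub_add_cancel, ih]

lemma mul_self_add_one_of_det_eq_one {R : Type*} [CommRing R] {A : Matrix (Fin 2) (Fin 2) R}
    (hA : A.det = 1) : A * A + 1 = A.trace • A := by
  nontriviality R
  have h := A.aeval_self_charpoly
  rw [charpoly_fin_two, hA] at h
  simp only [map_add, map_sub, map_pow, map_mul, aeval_X, aeval_C, map_one] at h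
  rw [← sub_eq_zero, ← h, Algebra.smul_def, sq]
  abel

end TransferMatrix

section JacobiRecurrence

open Matrix
open scoped Matrix.Module

variable {M : Type*} [AddCommGroup M] [Module ℝ[X] M] {a b : ℤ → ℝ} {v : ℤ → M} {p : ℕ}

/-- The three-term recurrence with parameters `(a, b)`, for sequences in an `ℝ[X]`-module:
the spectral parameter is the action of `X`. -/
def IsJacobiSolution (a b : ℤ → ℝ) (v : ℤ → M) : Prop :=
  ∀ n, (X : ℝ[X]) • v n =
    C (a (n - 1)) • v (n - 1) + C (b n) • v n + C (a n) • v (n + 1)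

/-- The pair `(v (n + 1), a n • v n)`; the transfer matrix at the site `n` produces it from
the pair at `n - 1`. -/
def transferVec (a : ℤ → ℝ) (v : ℤ → M) (n : ℤ) : Fin 2 → M :=
  ![v (n + 1), C (a n) • v n]

lemma transferVec_translate (k n : ℤ) :
    transferVec (fun m ↦ a (m + k)) (fun m ↦ v (m + k)) n = transferVec a v (n + k) := by
  simp only [transferVec, add_right_comm]

namespace IsJacobiSolution

lemma translate (hv : IsJacobiSolution a b v) (k : ℤ) :
    IsJacobiSolution (fun n ↦ a (n + k)) (fun n ↦ b (n + k)) (fun n ↦ v (n + k)) := fun n ↦ by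
  simpa only [sub_add_eq_add_sub, add_right_comm] using hv (n + k)

lemma lamMat_smul_transferVec (hv : IsJacobiSolution a b v) {n : ℤ} (ha : a n ≠ 0) :
    lamMat a b n • transferVec a v (n - 1) = transferVec a v n := by
  have hcancel : C (a n)⁻¹ * C (a n) = 1 := by rw [← C_mul, inv_mul_cancel₀ ha, C_1]
  ext i
  fin_cases i
  · have hX : (X - C (b n)) • v n - C (a (n - 1)) • v (n - 1) = C (a n) • v (n + 1) := by
      rw [sub_smul, hv n]
      abel
    have hsolve : C (a n)⁻¹ • ((X - C (b n)) • v n - C (a (n - 1)) • v (n - 1)) = v (n + 1) := by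
      rw [hX, smul_smul, hcancel, one_smul]
    simpa [lamMat_eq, transferVec, mul_smul, smul_sub, ← sub_eq_add_neg] using hsolve
  · have hsq : C (a n)⁻¹ * C (a n) ^ 2 = C (a n) := by rw [sq, ← mul_assoc, hcancel, one_mul]
    simp [lamMat_eq, transferVec, hsq]

lemma tMat_smul_transferVec (hv : IsJacobiSolution a b v) (ha : ∀ n, a n ≠ 0) (n : ℕ) :
    tMat a b n • transferVec a v 0 = transferVec a v n := by
  induction n with
  | zero => simp [tMat]
  | succ n ih =>
    rw [tMat, mul_smul, ih, Nat.cast_succ, ← hv.lamMat_smul_transferVec (ha (n + 1)),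
      add_sub_cancel_right]

lemma disc_smul_transferVec (hv : IsJacobiSolution a b v) (ha : ∀ n, a n ≠ 0)
    (hap : a.Periodic p) (hbp : b.Periodic p) :
    disc a b p • transferVec a v p = transferVec a v (p + p) + transferVec a v 0 := by
  have hap' : (fun n ↦ a (n + p)) = a := funext hap
  have hbp' : (fun n ↦ b (n + p)) = b := funext hbp
  have hT := hv.tMat_smul_transferVec ha p
  have hTT := (hv.translate p).tMat_smul_transferVec (fun n ↦ ha _) p
  rw [transferVec_translate, transferVec_translate, hap', hbp', zero_add] at hTT
  calc disc a b p • transferVec a v p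
      = (disc a b p • tMat a b p) • transferVec a v 0 := by rw [smul_assoc, hT]
    _ = (tMat a b p * tMat a b p + 1) • transferVec a v 0 := by
      rw [disc, mul_self_add_one_of_det_eq_one (det_tMat ha p)]
    _ = transferVec a v (p + p) + transferVec a v 0 := by
      rw [add_smul, mul_smul, hT, hTT, one_smul]

theorem disc_smul (hv : IsJacobiSolution a b v) (ha : ∀ n, a n ≠ 0)
    (hap : a.Periodic p) (hbp : b.Periodic p) (n : ℤ) :
    disc a b p • v n = v (n + p) + v (n - p) := by
  have h := (hv.translate (n - p - 1)).disc_smul_transferVec (fun n ↦ ha _)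
    (hap.add_const _) (hbp.add_const _)
  rw [disc_translate hap hbp] at h
  simp only [transferVec_translate] at h
  have h0 := congrFun h 0
  simp only [transferVec, Pi.smul_apply, Pi.add_apply, cons_val_zero] at h0
  convert h0 using 3 <;> ring

end IsJacobiSolution

end JacobiRecurrence

section UnitVectors

/-- The standard basis vector of `ℓ²(ℤ)` at the site `n`. -/
def unitVec (n : ℤ) : HZ := lp.single 2 n 1

lemma unitVec_apply (n m : ℤ) : unitVec n m = if m = n then 1 else 0 := by
  rw [unitVec, lp.single_apply, Pi.single_apply]

lemma continuousLinearMap_ext_lp_single {α 𝕜 F : Type*} {E : α → Type*} {r : ENNReal}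
    [DecidableEq α] [NormedRing 𝕜] [∀ i, NormedAddCommGroup (E i)] [∀ i, Module 𝕜 (E i)]
    [∀ i, IsBoundedSMul 𝕜 (E i)] [AddCommMonoid F] [Module 𝕜 F] [TopologicalSpace F]
    [T2Space F] [Fact (1 ≤ r)] (hr : r ≠ ⊤) {f g : lp E r →L[𝕜] F}
    (h : ∀ i x, f (lp.single r i x) = g (lp.single r i x)) : f = g := by
  ext u
  have hu := lp.hasSum_single hr u
  have hg : HasSum (fun i ↦ f (lp.single r i (u i))) (g u) := by
    simpa only [Function.comp_def, h] using g.hasSum hu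
  exact (f.hasSum hu).unique hg

lemma continuousLinearMap_ext_unitVec {F : Type*} [AddCommMonoid F] [Module ℂ F]
    [TopologicalSpace F] [T2Space F] {f g : HZ →L[ℂ] F}
    (h : ∀ n, f (unitVec n) = g (unitVec n)) : f = g :=
  continuousLinearMap_ext_lp_single (by simp) fun n x ↦ by
    have hx : (lp.single 2 n x : HZ) = x • unitVec n := by
      rw [unitVec, ← lp.single_smul, smul_eq_mul, mul_one]
    rw [hx, map_smul, map_smul, h]

end UnitVectors

section Shift

open ContinuousLinearMap (adjoint)

/-- `S` is the right shift on `ℓ²(ℤ)`, specified by its action on coordinates. -/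
def IsRightShift (S : HZ →L[ℂ] HZ) : Prop := ∀ (u : HZ) (n : ℤ), S u n = u (n - 1)

namespace IsRightShift

variable {S : HZ →L[ℂ] HZ}

lemma apply_unitVec (hS : IsRightShift S) (n : ℤ) : S (unitVec n) = unitVec (n + 1) := by
  ext m
  simp only [hS _ m, unitVec_apply, sub_eq_iff_eq_add]

lemma adjoint_apply_unitVec (hS : IsRightShift S) (n : ℤ) :
    adjoint S (unitVec n) = unitVec (n - 1) := by
  ext m
  have h := S.adjoint_inner_right (unitVec m) (unitVec n)
  rw [hS.apply_unitVec] at h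
  simpa [unitVec, lp.inner_single_left, Pi.single_apply, eq_sub_iff_add_eq] using h

lemma pow_apply_unitVec (hS : IsRightShift S) (k : ℕ) (n : ℤ) :
    (S ^ k) (unitVec n) = unitVec (n + k) := by
  induction k with
  | zero => simp
  | succ k ih =>
    rw [pow_succ', mul_apply_eq_comp, ih, hS.apply_unitVec, Nat.cast_succ, add_assoc]

lemma adjoint_pow_apply_unitVec (hS : IsRightShift S) (k : ℕ) (n : ℤ) :
    (adjoint S ^ k) (unitVec n) = unitVec (n - k) := by
  induction k with
  | zero => simp
  | succ k ih =>
    rw [pow_succ', mul_apply_eq_comp, ih, hS.adjoint_apply_unitVec, Nat.cast_succ, sub_sub]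

end IsRightShift

end Shift

section JacobiOperator

open ContinuousLinearMap (adjoint)

/-- `J` is the Jacobi operator on `ℓ²(ℤ)` with parameters `(a, b)`, specified by its action on
coordinates; boundedness of `a` and `b` is implicit in the continuity of `J`. -/
def IsJacobiOperator (a b : ℤ → ℝ) (J : HZ →L[ℂ] HZ) : Prop :=
  ∀ (u : HZ) (n : ℤ),
    J u n = (a (n - 1) : ℂ) * u (n - 1) + (b n : ℂ) * u n + (a n : ℂ) * u (n + 1)

instance isScalarTower_real_continuousLinearMap : IsScalarTower ℝ (HZ →L[ℂ] HZ) HZ :=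
  ⟨fun _ _ _ ↦ rfl⟩

namespace IsJacobiOperator

variable {a b : ℤ → ℝ} {J S : HZ →L[ℂ] HZ} {p : ℕ} {u : HZ} {N : ℤ}

lemma apply_unitVec (hJ : IsJacobiOperator a b J) (n : ℤ) :
    J (unitVec n) =
      a (n - 1) • unitVec (n - 1) + b n • unitVec n + a n • unitVec (n + 1) := by
  ext m
  simp only [hJ _ m, lp.coeFn_add, lp.coeFn_smul, Pi.add_apply, Pi.smul_apply, unitVec_apply,
    Complex.real_smul]
  rcases eq_or_ne m n with rfl | h
  · simp [eq_sub_iff_add_eq]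
  rcases eq_or_ne m (n + 1) with rfl | h₁
  · simp [add_assoc, eq_sub_iff_add_eq]
  rcases eq_or_ne m (n - 1) with rfl | h₂
  · simp [sub_eq_iff_eq_add, sub_sub, add_assoc]
  simp [h, h₁, h₂, sub_eq_iff_eq_add, ← eq_sub_iff_add_eq]

lemma isJacobiSolution_unitVec (hJ : IsJacobiOperator a b J) :
    IsJacobiSolution a b fun n ↦ Module.AEval.of ℝ HZ J (unitVec n) := fun n ↦ by
  rw [Module.AEval.X_smul_of, ContinuousLinearMap.smul_def, hJ.apply_unitVec]
  simp only [map_add, map_smul, Module.AEval.C_smul]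

theorem aeval_disc (hJ : IsJacobiOperator a b J) (hS : IsRightShift S) (ha : ∀ n, a n ≠ 0)
    (hap : a.Periodic p) (hbp : b.Periodic p) :
    aeval J (disc a b p) = S ^ p + adjoint S ^ p :=
  continuousLinearMap_ext_unitVec fun n ↦ by
    have h := hJ.isJacobiSolution_unitVec.disc_smul ha hap hbp n
    rw [← Module.AEval.of_aeval_smul, ← map_add, EmbeddingLike.apply_eq_iff_eq] at h
    rw [add_apply, hS.pow_apply_unitVec, hS.adjoint_pow_apply_unitVec]
    exact h

theorem periodic_of_commute (hJ : IsJacobiOperator a b J) (hS : IsRightShift S)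
    (hcomm : Commute J (S ^ p + adjoint S ^ p)) : a.Periodic p ∧ b.Periodic p := by
  rcases eq_or_ne p 0 with rfl | hp
  · simp [Function.Periodic]
  have hcoord (n m : ℤ) := congrArg (fun w : HZ ↦ w m) (DFunLike.congr_fun hcomm.eq (unitVec n))
  simp only [mul_apply_eq_comp, add_apply, hS.pow_apply_unitVec, hS.adjoint_pow_apply_unitVec,
    map_add, ContinuousLinearMap.map_smul_of_tower, hJ.apply_unitVec, lp.coeFn_add,
    lp.coeFn_smul, Pi.add_apply, Pi.smul_apply, Complex.real_smul, unitVec_apply] at hcoord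
  -- At the coordinates `n + p + 1` and `n + p` only the forward translates are visible.
  refine ⟨fun n ↦ ?_, fun n ↦ ?_⟩
  · have h := hcoord n (n + p + 1)
    simp (disch := omega) only [if_pos, if_neg] at h
    simpa using h
  · have h := hcoord n (n + p)
    simp (disch := omega) only [if_neg] at h
    simpa using h

lemma pow_apply_eq_zero_of_lt (hJ : IsJacobiOperator a b J) (hu : ∀ m > N, u m = 0) (k : ℕ) {m : ℤ}
    (hm : N + k < m) : (J ^ k) u m = 0 := by
  induction k generalizing m with
  | zero => exact hu m (by simpa using hm)
  | succ k ih =>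
    push_cast at hm
    rw [pow_succ', mul_apply_eq_comp, hJ, ih (by omega), ih (by omega), ih (by omega)]
    simp

lemma pow_apply_add_natCast (hJ : IsJacobiOperator a b J) (hu : ∀ m > N, u m = 0) (k : ℕ) :
    (J ^ k) u (N + k) = (∏ i ∈ Finset.range k, (a (N + i) : ℂ)) * u N := by
  induction k with
  | zero => simp
  | succ k ih =>
    have h₁ : (J ^ k) u (N + k + 1) = 0 := hJ.pow_apply_eq_zero_of_lt hu k (by omega)
    have h₂ : (J ^ k) u (N + k + 1 + 1) = 0 := hJ.pow_apply_eq_zero_of_lt hu k (by omega)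
    rw [Nat.cast_succ, ← add_assoc, pow_succ', mul_apply_eq_comp, hJ, h₁, h₂,
      add_sub_cancel_right, ih, Finset.prod_range_succ]
    ring

lemma aeval_apply_add_natDegree (hJ : IsJacobiOperator a b J) (hu : ∀ m > N, u m = 0)
    (q : ℂ[X]) : aeval J q u (N + q.natDegree) =
      q.leadingCoeff * ((∏ i ∈ Finset.range q.natDegree, (a (N + i) : ℂ)) * u N) := by
  have hlow : ∀ i ∈ Finset.range q.natDegree, (J ^ i) u (N + q.natDegree) = 0 := fun i hi ↦
    hJ.pow_apply_eq_zero_of_lt hu i (by simpa using hi)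
  rw [aeval_eq_sum_range, sum_apply, lp.coeFn_sum, Finset.sum_apply, Finset.sum_range_succ,
    Finset.sum_eq_zero fun i hi ↦ ?_, zero_add, ← hJ.pow_apply_add_natCast hu]
  · rfl
  · rw [smul_apply, lp.coeFn_smul, Pi.smul_apply, hlow i hi, smul_zero]

theorem aeval_injective (hJ : IsJacobiOperator a b J) (ha : ∀ n, a n ≠ 0) :
    Function.Injective (aeval J : ℂ[X] → HZ →L[ℂ] HZ) := by
  rw [injective_iff_map_eq_zero]
  intro q hq
  have hvanish : ∀ m > (0 : ℤ), unitVec 0 m = 0 := fun m hm ↦ by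
    rw [unitVec_apply, if_neg hm.ne']
  have h := hJ.aeval_apply_add_natDegree hvanish q
  simpa [hq, unitVec_apply, Finset.prod_eq_zero_iff, ha] using h.symm

end IsJacobiOperator

end JacobiOperator

theorem statement1_general (p : ℕ) (q : ℂ[X]) (a b : ℤ → ℝ) (ha : ∀ n, a n ≠ 0)
    (J : HZ →L[ℂ] HZ) (hJ : IsJacobiOperator a b J) (S : HZ →L[ℂ] HZ) (hS : IsRightShift S) :
    aeval J q = S ^ p + ContinuousLinearMap.adjoint S ^ p ↔
      a.Periodic p ∧ b.Periodic p ∧ (disc a b p).map (algebraMap ℝ ℂ) = q := by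
  constructor
  · intro hq
    have hcomm : Commute J (S ^ p + ContinuousLinearMap.adjoint S ^ p) := by
      rw [← hq]
      simpa using (Commute.all X q).map (aeval J)
    obtain ⟨hap, hbp⟩ := hJ.periodic_of_commute hS hcomm
    refine ⟨hap, hbp, hJ.aeval_injective ha ?_⟩
    rw [aeval_map_algebraMap, hJ.aeval_disc hS ha hap hbp, hq]
  · rintro ⟨hap, hbp, rfl⟩
    rw [aeval_map_algebraMap, hJ.aeval_disc hS ha hap hbp]

/-- the magic formula for Jacobi matrices:
`Δ_{J₀}(J) = S^p + S^{−p}` iff `J` lies in the isospectral torus of `J₀`. -/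
theorem statement1 (p : ℕ) (hp : 1 ≤ p)
    (a0 b0 : ℤ → ℝ) (ha0pos : ∀ n, 0 < a0 n)
    (hpera : Function.Periodic a0 (p : ℤ)) (hperb : Function.Periodic b0 (p : ℤ))
    (a b : ℤ → ℝ) (hbdd : ∃ C : ℝ, ∀ n : ℤ, |a n| ≤ C ∧ |b n| ≤ C)
    (hpos : ∀ n : ℤ, 0 < a n)
    (J : HZ →L[ℂ] HZ)
    (hJ : ∀ (u : HZ) (n : ℤ),
      (J u) n = (a (n - 1) : ℂ) * u (n - 1) + (b n : ℂ) * u n + (a n : ℂ) * u (n + 1))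
    (S : HZ →L[ℂ] HZ)
    (hS : ∀ (u : HZ) (n : ℤ), (S u) n = u (n - 1)) :
    polyOp (disc a0 b0 p) J = S ^ p + (ContinuousLinearMap.adjoint S) ^ p ↔
      InTorus p a0 b0 a b := by
  rw [polyOp, statement1_general p _ a b (fun n ↦ (hpos n).ne') J hJ S hS,
    (map_injective _ Complex.ofReal_injective).eq_iff, InTorus, and_iff_right hpos]
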